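/- arXiv:2001.08881 — 2 statements merged into one kernel-verified Lean document; each statement's English description precedes it below -/
import Mathlib

section
/- Let x_1 = y_1 = 1, x_2 = 5, y_2 = 3, and for n ≥ 3 let x_n = 4x_{n-1} − x_{n-2} and y_n = 4y_{n-1} − y_{n-2}. Then x_{n-1}x_{n-2} − 3y_{n-1}y_{n-2} = −4 for all n ≥ 3. -/
/-- If `x₁ = y₁ = 1`, `x₂ = 5`, `y₂ = 3` and `xₙ = 4xₙ₋₁ − xₙ₋₂`, `yₙ = 4yₙ₋₁ − yₙ₋₂`
for `n ≥ 3`, then `xₙ₋₁xₙ₋₂ − 3yₙ₋₁yₙ₋₂ = −4` for all `n ≥ 3`. -/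
theorem x_mul_x_sub_three_y_mul_y_eq_neg_four (x y : ℕ → ℤ)
    (hx1 : x 1 = 1) (hy1 : y 1 = 1) (hx2 : x 2 = 5) (hy2 : y 2 = 3)
    (hx : ∀ n, 3 ≤ n → x n = 4 * x (n - 1) - x (n - 2))
    (hy : ∀ n, 3 ≤ n → y n = 4 * y (n - 1) - y (n - 2)) :
    ∀ n, 3 ≤ n → x (n - 1) * x (n - 2) - 3 * (y (n - 1) * y (n - 2)) = -4 := by
  have key : ∀ k : ℕ, x (k+1) ^ 2 - 3 * y (k+1) ^ 2 = -2 ∧ x (k+2) ^ 2 - 3 * y (k+2) ^ 2 = -2 ∧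
      x (k+2) * x (k+1) - 3 * (y (k+2) * y (k+1)) = -4 := by
    intro k
    induction k with
    | zero => simp [hx1, hx2, hy1, hy2]
    | succ k ih =>
      obtain ⟨h1, h2, h3⟩ := ih
      have ex : x (k + 3) = 4 * x (k + 2) - x (k + 1) := hx (k + 3) (by omega)
      have ey : y (k + 3) = 4 * y (k + 2) - y (k + 1) := hy (k + 3) (by omega)
      refine ⟨h2, ?_, ?_⟩
      · change x (k + 3) ^ 2 - 3 * y (k + 3) ^ 2 = -2
        rw [ex, ey]
        linear_combination 16 * h2 - 8 * h3 + h1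
      · change x (k + 3) * x (k + 2) - 3 * (y (k + 3) * y (k + 2)) = -4
        rw [ex, ey]
        linear_combination 4 * h2 - h3
  intro n hn
  obtain ⟨k, rfl⟩ := Nat.exists_eq_add_of_le' hn
  exact (key k).2.2
end

section
/- Let p(x) = ∑ a_j x^j be a polynomial with real coefficients and let b be a nonzero real number. Then p has a root at bi (as a complex number) if and only if both p_even(x) = ∑ a_{2j} x^j and p_odd(x) = ∑ a_{2j+1} x^j have roots at −b². -/
open Polynomial

/-- The even part `p_even(x) = ∑ a_{2j} x^j` of a real polynomial `p(x) = ∑ a_j x^j`. -/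
noncomputable def evenPart (p : Polynomial ℝ) : Polynomial ℝ :=
  ∑ j ∈ Finset.range (p.natDegree + 1), C (p.coeff (2 * j)) * X ^ j

/-- The odd part `p_odd(x) = ∑ a_{2j+1} x^j` of a real polynomial `p(x) = ∑ a_j x^j`. -/
noncomputable def oddPart (p : Polynomial ℝ) : Polynomial ℝ :=
  ∑ j ∈ Finset.range (p.natDegree + 1), C (p.coeff (2 * j + 1)) * X ^ j

theorem aux_sum_split (f : ℕ → ℂ) (n : ℕ) :
    ∑ i ∈ Finset.range (2 * n), f i =
      ∑ j ∈ Finset.range n, f (2 * j) + ∑ j ∈ Finset.range n, f (2 * j + 1) := by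
  induction n with
  | zero => simp
  | succ k ih =>
    rw [show 2 * (k + 1) = 2 * k + 1 + 1 by ring, Finset.sum_range_succ, Finset.sum_range_succ,
      Finset.sum_range_succ, Finset.sum_range_succ, ih]
    ring

theorem aux_aeval (p : Polynomial ℝ) (b : ℝ) :
    aeval ((b : ℂ) * Complex.I) p =
      (((evenPart p).eval (-b ^ 2) : ℝ) : ℂ) +
        (b * (((oddPart p).eval (-b ^ 2) : ℝ) : ℂ)) * Complex.I := by
  have h2 : ((b : ℂ) * Complex.I) ^ 2 = -(b : ℂ) ^ 2 := by
    rw [mul_pow, Complex.I_sq]; ring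
  rw [aeval_eq_sum_range' (show p.natDegree < 2 * (p.natDegree + 1) by omega), aux_sum_split]
  simp only [evenPart, oddPart, eval_finset_sum, eval_mul, eval_C, eval_pow, eval_X,
    Complex.ofReal_sum, Complex.ofReal_mul, Complex.ofReal_pow, Complex.ofReal_neg,
    Finset.mul_sum, Finset.sum_mul, Complex.real_smul]
  congr 1
  · refine Finset.sum_congr rfl fun j _ => ?_
    rw [pow_mul, h2]
  refine Finset.sum_congr rfl fun j _ => ?_
  rw [pow_succ, pow_mul, h2]
  ring

/-- A real polynomial `p` has a root at `bi` (`b` a nonzero real) if and only if both its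
even and odd parts have roots at `−b²`. -/
theorem root_bI_iff_evenPart_oddPart_root (p : Polynomial ℝ) (b : ℝ) (hb : b ≠ 0) :
    aeval ((b : ℂ) * Complex.I) p = 0 ↔
      (evenPart p).eval (-b ^ 2) = 0 ∧ (oddPart p).eval (-b ^ 2) = 0 := by
  rw [aux_aeval, Complex.ext_iff]
  simp [hb]
end
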